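/- arXiv:2302.00596 — 2 statements merged into one kernel-verified Lean document; each statement's English description precedes it below -/
import Mathlib

section
/- For every integer n with 0 ≤ n ≤ N−1, provided τ(a) ≠ 0, the weighted Racah polynomials satisfy R̂_n(a+1) = E·√[(ρ(a+1)/ρ(a))·((2a+3)/(2a+1))]·R̂_n(a), where E = 1 − 2·λ_n·(a+1)/τ(a) = 1 + 2n(α+β+n+1)(a+1) / [(α+1)(β+1) + a(a+1)(α+β+2) − a(α+1)(a−β) − b(β+1)(b+α)]. -/
open Finset

/-- Rising Pochhammer symbol `(x)_k = x (x+1) ⋯ (x+k-1)` for a real `x`. -/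
noncomputable def pochR (x : ℝ) (k : ℕ) : ℝ := ∏ i ∈ Finset.range k, (x + i)

/-- The `n`-th Racah polynomial in Zhu's normalization. -/
noncomputable def racahR (a b α β : ℝ) (n : ℕ) (s : ℝ) : ℝ :=
  (1 / (Nat.factorial n : ℝ)) * pochR (a + b + α + 1) n * pochR (β + 1) n *
    pochR (a - b + 1) n *
    ∑ k ∈ Finset.range (n + 1),
      pochR (-(n : ℝ)) k * pochR (a - s) k * pochR (a + s + 1) k *
          pochR (α + β + (n : ℝ) + 1) k /
        (pochR (β + 1) k * pochR (a + b + α + 1) k * pochR (a - b + 1) k *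
          (Nat.factorial k : ℝ))

/-- The Racah weight function `ρ(s)`. -/
noncomputable def racahW (a b α β : ℝ) (s : ℝ) : ℝ :=
  Real.Gamma (a + s + 1) * Real.Gamma (b + s + α + 1) * Real.Gamma (b + α - s) *
      Real.Gamma (s - a + β + 1) /
    (Real.Gamma (b + s + 1) * Real.Gamma (b - s) * Real.Gamma (s - a + 1) *
      Real.Gamma (a - β + s + 1))

/-- The squared norm `d_n²`. -/
noncomputable def racahD2 (a b α β : ℝ) (n : ℕ) : ℝ :=
  Real.Gamma (α + n + 1) * Real.Gamma (β + n + 1) * Real.Gamma (a + b + α + n + 1) *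
      Real.Gamma (b - a + α + β + n + 1) /
    ((α + β + 2 * n + 1) * Real.Gamma (n + 1) * Real.Gamma (b - a - n) *
      Real.Gamma (α + β + n + 1) * Real.Gamma (a + b - n - β))

/-- The weighted Racah polynomial `R̂_n(s) = R_n(s) √(ρ(s)(2s+1)/d_n²)`. -/
noncomputable def racahHat (a b α β : ℝ) (n : ℕ) (s : ℝ) : ℝ :=
  racahR a b α β n s * Real.sqrt (racahW a b α β s * (2 * s + 1) / racahD2 a b α β n)

/-- `σ(s) = (s−a)(s+b)(s+a−β)(b+α−s)`. -/
noncomputable def racahSigma (a b α β : ℝ) (s : ℝ) : ℝ :=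
  (s - a) * (s + b) * (s + a - β) * (b + α - s)

/-- `τ(s)`. -/
noncomputable def racahTau (a b α β : ℝ) (s : ℝ) : ℝ :=
  a * (α + 1) * (a - β) + b * (b + α) * (β + 1) - (α + 1) * (β + 1) -
    s * (s + 1) * (α + β + 2)

/-- `λ_n = n (n+α+β+1)`. -/
noncomputable def racahLam (α β : ℝ) (n : ℕ) : ℝ := (n : ℝ) * ((n : ℝ) + α + β + 1)

/-! `R_n(s)` is a multiple of a terminating `₄F₃` series whose `k`-th term contains the factor
`(a - s)_k`. At `s = a` only the term `k = 0` survives, and at `s = a + 1` only `k = 0` and `k = 1`;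
the value of the latter is `-2 λ_n (a + 1) / τ(a)` because `τ(a)` factors completely. The weights
contribute the square root, since the squared norm `d_n²` does not depend on `s`. -/

lemma pochR_zero (x : ℝ) : pochR x 0 = 1 :=
  Finset.prod_range_zero _

lemma pochR_one (x : ℝ) : pochR x 1 = x := by
  simp [pochR]

lemma pochR_neg_natCast_of_lt {i k : ℕ} (h : i < k) : pochR (-(i : ℝ)) k = 0 :=
  Finset.prod_eq_zero (Finset.mem_range.2 h) (neg_add_cancel _)

/-- The `k`-th term of the hypergeometric series `₄F₃(-n, a - s, a + s + 1, α + β + n + 1;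
β + 1, a + b + α + 1, a - b + 1; 1)` in the definition of `R_n(s)`. -/
noncomputable def racahTerm (a b α β : ℝ) (n : ℕ) (s : ℝ) (k : ℕ) : ℝ :=
  pochR (-(n : ℝ)) k * pochR (a - s) k * pochR (a + s + 1) k * pochR (α + β + (n : ℝ) + 1) k /
    (pochR (β + 1) k * pochR (a + b + α + 1) k * pochR (a - b + 1) k * (Nat.factorial k : ℝ))

section Polynomial

variable (a b α β : ℝ) (n : ℕ)

lemma racahTerm_zero (s : ℝ) : racahTerm a b α β n s 0 = 1 := by
  simp [racahTerm, pochR_zero]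

lemma racahTerm_one (s : ℝ) :
    racahTerm a b α β n s 1 =
      -(n : ℝ) * (a - s) * (a + s + 1) * (α + β + n + 1) /
        ((β + 1) * (a + b + α + 1) * (a - b + 1)) := by
  simp [racahTerm, pochR_one]

lemma racahTerm_eq_zero_of_lt (s : ℝ) {n k : ℕ} (h : n < k) : racahTerm a b α β n s k = 0 := by
  simp [racahTerm, pochR_neg_natCast_of_lt h]

lemma racahTerm_add_natCast_eq_zero_of_lt {m k : ℕ} (h : m < k) :
    racahTerm a b α β n (a + m) k = 0 := by
  simp [racahTerm, pochR_neg_natCast_of_lt h]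

lemma racahR_eq_mul_sum_racahTerm (s : ℝ) :
    racahR a b α β n s =
      1 / (Nat.factorial n : ℝ) * pochR (a + b + α + 1) n * pochR (β + 1) n *
        pochR (a - b + 1) n * ∑ k ∈ range (n + 1), racahTerm a b α β n s k :=
  rfl

lemma sum_racahTerm_add_natCast (m : ℕ) :
    ∑ k ∈ range (n + 1), racahTerm a b α β n (a + m) k =
      ∑ k ∈ range (m + 1), racahTerm a b α β n (a + m) k := by
  refine sum_congr_of_eq_on_inter (fun k _ hk ↦ ?_) (fun k _ hk ↦ ?_) (fun _ _ _ ↦ rfl)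
  · exact racahTerm_add_natCast_eq_zero_of_lt a b α β n (by simpa using hk)
  · exact racahTerm_eq_zero_of_lt a b α β _ (by simpa using hk)

lemma racahR_self :
    racahR a b α β n a =
      1 / (Nat.factorial n : ℝ) * pochR (a + b + α + 1) n * pochR (β + 1) n *
        pochR (a - b + 1) n := by
  have hsum := sum_racahTerm_add_natCast a b α β n 0
  rw [Nat.cast_zero, add_zero, sum_range_one, racahTerm_zero] at hsum
  rw [racahR_eq_mul_sum_racahTerm, hsum, mul_one]

lemma racahR_add_natCast (m : ℕ) :
    racahR a b α β n (a + m) =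
      racahR a b α β n a * ∑ k ∈ range (m + 1), racahTerm a b α β n (a + m) k := by
  rw [racahR_eq_mul_sum_racahTerm, racahR_self, sum_racahTerm_add_natCast]

lemma racahTau_self :
    racahTau a b α β a = -((β + 1) * (a + b + α + 1) * (a - b + 1)) := by
  unfold racahTau
  ring

lemma racahR_add_one :
    racahR a b α β n (a + 1) =
      (1 - 2 * racahLam α β n * (a + 1) / racahTau a b α β a) * racahR a b α β n a := by
  have hterm : racahTerm a b α β n (a + 1) 1 =
      -(2 * racahLam α β n * (a + 1) / racahTau a b α β a) := by
    rw [racahTerm_one, racahTau_self, div_neg, neg_neg, racahLam]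
    ring
  have hR := racahR_add_natCast a b α β n 1
  rw [Nat.cast_one, sum_range_succ, sum_range_one, racahTerm_zero, hterm] at hR
  rw [hR]
  ring

lemma one_sub_two_mul_racahLam_div_racahTau_self :
    1 - 2 * racahLam α β n * (a + 1) / racahTau a b α β a =
      1 + 2 * n * (α + β + n + 1) * (a + 1) /
        ((α + 1) * (β + 1) + a * (a + 1) * (α + β + 2) -
          a * (α + 1) * (a - β) - b * (β + 1) * (b + α)) := by
  have hden : (α + 1) * (β + 1) + a * (a + 1) * (α + β + 2) -
      a * (α + 1) * (a - β) - b * (β + 1) * (b + α) = -racahTau a b α β a := by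
    unfold racahTau
    ring
  rw [hden, div_neg, ← sub_eq_add_neg, racahLam]
  ring

end Polynomial

lemma racahW_pos {a b α β s : ℝ} (ha : -(1 / 2) < a) (hβ1 : -1 < β) (hβ2 : β < 2 * a + 1)
    (has : a ≤ s) (hsb : s < b) (hsbα : s < b + α) : 0 < racahW a b α β s := by
  unfold racahW
  have hΓ {x : ℝ} (hx : 0 < x) : 0 < Real.Gamma x := Real.Gamma_pos_of_pos hx
  have hnum := mul_pos (mul_pos (mul_pos (hΓ (x := a + s + 1) (by linarith))
    (hΓ (x := b + s + α + 1) (by linarith))) (hΓ (x := b + α - s) (by linarith)))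
    (hΓ (x := s - a + β + 1) (by linarith))
  have hden := mul_pos (mul_pos (mul_pos (hΓ (x := b + s + 1) (by linarith))
    (hΓ (x := b - s) (by linarith))) (hΓ (x := s - a + 1) (by linarith)))
    (hΓ (x := a - β + s + 1) (by linarith))
  exact div_pos hnum hden

lemma sqrt_div_eq_sqrt_div_mul {x y : ℝ} (hx : 0 < x) (hy : 0 ≤ y) (d : ℝ) :
    √(y / d) = √(y / x) * √(x / d) := by
  rw [← Real.sqrt_mul (by positivity), div_mul_div_cancel₀ hx.ne']

theorem racah_second_column_recurrence_general {a α β b : ℝ} (ha : -(1 / 2) < a)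
    (hβ1 : -1 < β) (hβ2 : β < 2 * a + 1) (hb : a + 1 < b) (hbα : a + 1 < b + α) (n : ℕ) :
    racahHat a b α β n (a + 1) =
        (1 - 2 * racahLam α β n * (a + 1) / racahTau a b α β a) *
          √((racahW a b α β (a + 1) / racahW a b α β a) * ((2 * a + 3) / (2 * a + 1))) *
          racahHat a b α β n a ∧
      1 - 2 * racahLam α β n * (a + 1) / racahTau a b α β a =
        1 + 2 * n * (α + β + n + 1) * (a + 1) /
          ((α + 1) * (β + 1) + a * (a + 1) * (α + β + 2) -
            a * (α + 1) * (a - β) - b * (β + 1) * (b + α)) := by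
  refine ⟨?_, one_sub_two_mul_racahLam_div_racahTau_self a b α β n⟩
  have hW₀ : 0 < racahW a b α β a :=
    racahW_pos ha hβ1 hβ2 le_rfl (by linarith) (by linarith)
  have hW₁ : 0 < racahW a b α β (a + 1) :=
    racahW_pos ha hβ1 hβ2 (by linarith) hb hbα
  have h₀ : 0 < 2 * a + 1 := by linarith
  have h₁ : 0 < 2 * a + 3 := by linarith
  rw [racahHat, racahHat, racahR_add_one, show 2 * (a + 1) + 1 = 2 * a + 3 by ring,
    sqrt_div_eq_sqrt_div_mul (mul_pos hW₀ h₀) (mul_pos hW₁ h₁).le, div_mul_div_comm]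
  ring

theorem racah_second_column_recurrence
    (N : ℕ) (hN : 2 ≤ N) (a α β b : ℝ) (ha : -(1/2) < a) (hα : -1 < α)
    (hβ1 : -1 < β) (hβ2 : β < 2 * a + 1) (hb : b = a + N)
    (n : ℕ) (hn : n ≤ N - 1) (hτ : racahTau a b α β a ≠ 0) :
    racahHat a b α β n (a + 1) =
        (1 - 2 * racahLam α β n * (a + 1) / racahTau a b α β a) *
          Real.sqrt ((racahW a b α β (a + 1) / racahW a b α β a) *
            ((2 * a + 3) / (2 * a + 1))) *
          racahHat a b α β n a ∧
      1 - 2 * racahLam α β n * (a + 1) / racahTau a b α β a =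
        1 + 2 * n * (α + β + n + 1) * (a + 1) /
          ((α + 1) * (β + 1) + a * (a + 1) * (α + β + 2) -
            a * (α + 1) * (a - β) - b * (β + 1) * (b + α)) := by
  have two_le_N : (2 : ℝ) ≤ N := by exact_mod_cast hN
  exact racah_second_column_recurrence_general ha hβ1 hβ2 (by linarith) (by linarith) n
end

section
/- In the special case a = α = β = 0 (so b = N), for every integer n with 2 ≤ n ≤ N−1 and every integer s with 0 ≤ s ≤ N−1, the weighted Racah polynomials satisfy the three-term recurrence R̂_n(s) = Θ10·R̂_{n−1}(s) + Θ20·R̂_{n−2}(s), where Θ10 = (2s(s+1) + n(n−1) − N² + 1)·√(4n²−1) / [n·(N−n)·(N+n)] and Θ20 = −[(n−1)·(N−n+1)·(N+n−1) / (n·(N−n)·(N+n))]·√((2n+1)/(2n−3)). -/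
open Finset

lemma pochR_succ (x : ℝ) (k : ℕ) : pochR x (k + 1) = pochR x k * (x + k) :=
  Finset.prod_range_succ _ _

lemma pochR_succ_left (x : ℝ) (k : ℕ) : pochR x (k + 1) = x * pochR (x + 1) k := by
  simp only [pochR, Finset.prod_range_succ', Nat.cast_zero, add_zero, Nat.cast_succ]
  rw [mul_comm]
  congr! 2
  ring

lemma pochR_one_s17 (n : ℕ) : pochR 1 n = n.factorial := by
  induction n with
  | zero => simp [pochR_zero]
  | succ n ih => rw [pochR_succ, ih, Nat.factorial_succ]; push_cast; ring

lemma pochR_neg_natCast_eq_zero {n k : ℕ} (h : n < k) : pochR (-(n : ℝ)) k = 0 :=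
  Finset.prod_eq_zero (Finset.mem_range.mpr h) (neg_add_cancel _)

/-- The quadratic-lattice Pochhammer symbol `⟨x⟩ₖ = (-x)ₖ (x + 1)ₖ`, a polynomial of degree `k`
in `x (x + 1)`. It describes the dependence of the Racah series on both `n` and `s`. -/
noncomputable def quadPoch (x : ℝ) (k : ℕ) : ℝ := pochR (-x) k * pochR (x + 1) k

lemma quadPoch_zero (x : ℝ) : quadPoch x 0 = 1 := by simp [quadPoch, pochR_zero]

lemma quadPoch_succ (x : ℝ) (k : ℕ) :
    quadPoch x (k + 1) = (k * (k + 1) - x * (x + 1)) * quadPoch x k := by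
  simp only [quadPoch, pochR_succ]
  ring

lemma quadPoch_add_one_succ (x : ℝ) (k : ℕ) :
    quadPoch (x + 1) (k + 1) = -((x + k + 1) * (x + k + 2)) * quadPoch x k := by
  have shift : (x + 1) * pochR (x + 1 + 1) (k + 1) =
      pochR (x + 1) k * (x + 1 + k) * (x + 2 + k) := by
    rw [← pochR_succ_left, pochR_succ, pochR_succ]
    push_cast
    ring
  rw [quadPoch, quadPoch, pochR_succ_left (-(x + 1)), show -(x + 1) + 1 = -x by ring]
  linear_combination (-pochR (-x) k) * shift

-- The reflection `x ↦ -1 - x` exchanges the two shifts.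
lemma quadPoch_neg_one_sub (x : ℝ) (k : ℕ) : quadPoch (-1 - x) k = quadPoch x k := by
  rw [quadPoch, quadPoch, mul_comm]
  ring_nf

lemma quadPoch_sub_one_succ (x : ℝ) (k : ℕ) :
    quadPoch (x - 1) (k + 1) = -((x - k) * (x - k - 1)) * quadPoch x k := by
  rw [← quadPoch_neg_one_sub, show -1 - (x - 1) = -1 - x + 1 by ring, quadPoch_add_one_succ,
    quadPoch_neg_one_sub]
  ring

lemma quadPoch_natCast_eq_zero {n k : ℕ} (h : n < k) : quadPoch n k = 0 := by
  rw [quadPoch, pochR_neg_natCast_eq_zero h, zero_mul]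

/-- The part `⟨s⟩ₖ / (k!² (b + 1)ₖ (1 - b)ₖ)` of the `k`-th term of the Racah series at
`a = α = β = 0` that does not depend on the degree `n`. -/
noncomputable def racahCoeff (b s : ℝ) (k : ℕ) : ℝ :=
  quadPoch s k / ((k.factorial : ℝ) ^ 2 * pochR (b + 1) k * pochR (1 - b) k)

lemma racahCoeff_succ {b : ℝ} (s : ℝ) {k : ℕ} (hb : b ^ 2 ≠ ((k : ℝ) + 1) ^ 2) :
    ((k : ℝ) + 1) ^ 2 * (((k : ℝ) + 1) ^ 2 - b ^ 2) * racahCoeff b s (k + 1) =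
      (k * (k + 1) - s * (s + 1)) * racahCoeff b s k := by
  have factor_ne_zero : ((k : ℝ) + 1) ^ 2 * (((k : ℝ) + 1) ^ 2 - b ^ 2) ≠ 0 :=
    mul_ne_zero (by positivity) (sub_ne_zero.mpr hb.symm)
  have denom_succ :
      ((k + 1).factorial : ℝ) ^ 2 * pochR (b + 1) (k + 1) * pochR (1 - b) (k + 1) =
        ((k : ℝ) + 1) ^ 2 * (((k : ℝ) + 1) ^ 2 - b ^ 2) *
          ((k.factorial : ℝ) ^ 2 * pochR (b + 1) k * pochR (1 - b) k) := by
    rw [pochR_succ, pochR_succ, Nat.factorial_succ]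
    push_cast
    ring
  rw [racahCoeff, racahCoeff, quadPoch_succ, denom_succ, ← mul_div_assoc,
    mul_div_mul_left _ _ factor_ne_zero, mul_div_assoc]

-- The right-hand side contains `⟨x⟩ₘ`, which vanishes when `x` is a natural number below `m`.
lemma sum_quadPoch_contiguous {b : ℝ} (s x : ℝ) {m : ℕ}
    (hb : ∀ k < m, b ^ 2 ≠ ((k : ℝ) + 1) ^ 2) :
    ∑ k ∈ Finset.range (m + 1),
      ((x + 1) * (b ^ 2 - (x + 1) ^ 2) * quadPoch (x + 1) k +
        (2 * x + 1) * (2 * s * (s + 1) + (x + 1) * x - b ^ 2 + 1) * quadPoch x k +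
        x * (b ^ 2 - x ^ 2) * quadPoch (x - 1) k) * racahCoeff b s k =
      -2 * (2 * x + 1) * (m * (m + 1) - s * (s + 1)) * racahCoeff b s m * quadPoch x m := by
  induction m with
  | zero =>
    simp only [zero_add, Finset.sum_range_one, quadPoch_zero, Nat.cast_zero]
    ring
  | succ m ih =>
    rw [Finset.sum_range_succ, ih fun k hk => hb k (by omega), quadPoch_add_one_succ,
      quadPoch_sub_one_succ, quadPoch_succ]
    push_cast
    linear_combination (2 * (2 * x + 1) * quadPoch x m) * racahCoeff_succ s (hb m m.lt_succ_self)

/-- The terminating balanced series `₄F₃(-n, n + 1, -s, s + 1; 1, b + 1, 1 - b; 1)`, to which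
`R_n(s)` reduces at `a = α = β = 0` up to normalization. -/
noncomputable def racahSeries (b s : ℝ) (n : ℕ) : ℝ :=
  ∑ k ∈ Finset.range (n + 1), quadPoch n k * racahCoeff b s k

lemma racahSeries_eq_sum_range (b s : ℝ) {n m : ℕ} (h : n ≤ m) :
    racahSeries b s n = ∑ k ∈ Finset.range (m + 1), quadPoch n k * racahCoeff b s k := by
  refine Finset.sum_subset (Finset.range_mono (by omega)) fun k _ hk => ?_
  rw [quadPoch_natCast_eq_zero (by simpa using hk), zero_mul]

lemma racahSeries_three_term {b : ℝ} (s : ℝ) {m : ℕ}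
    (hb : ∀ k < m + 2, b ^ 2 ≠ ((k : ℝ) + 1) ^ 2) :
    ((m : ℝ) + 2) * (b ^ 2 - ((m : ℝ) + 2) ^ 2) * racahSeries b s (m + 2) +
      (2 * (m : ℝ) + 3) * (2 * s * (s + 1) + ((m : ℝ) + 2) * (m + 1) - b ^ 2 + 1) *
        racahSeries b s (m + 1) +
      ((m : ℝ) + 1) * (b ^ 2 - ((m : ℝ) + 1) ^ 2) * racahSeries b s m = 0 := by
  have contiguous := sum_quadPoch_contiguous s ((m + 1 : ℕ) : ℝ) hb
  rw [quadPoch_natCast_eq_zero (by omega), mul_zero] at contiguous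
  rw [racahSeries_eq_sum_range b s le_rfl,
    racahSeries_eq_sum_range b s (show m + 1 ≤ m + 2 by omega),
    racahSeries_eq_sum_range b s (show m ≤ m + 2 by omega), Finset.mul_sum, Finset.mul_sum,
    Finset.mul_sum, ← Finset.sum_add_distrib, ← Finset.sum_add_distrib, ← contiguous]
  refine Finset.sum_congr rfl fun k _ => ?_
  push_cast
  rw [show (m : ℝ) + 1 + 1 = m + 2 by ring, add_sub_cancel_right]
  ring

lemma racahR_eq_mul_racahSeries (b s : ℝ) (n : ℕ) :
    racahR 0 b 0 0 n s = pochR (b + 1) n * pochR (1 - b) n * racahSeries b s n := by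
  have factorial_ne_zero : (n.factorial : ℝ) ≠ 0 := by positivity
  have term_eq (k : ℕ) :
      pochR (-(n : ℝ)) k * pochR (-s) k * pochR (s + 1) k * pochR ((n : ℝ) + 1) k /
          (k.factorial * pochR (b + 1) k * pochR (1 - b) k * k.factorial) =
        quadPoch n k * racahCoeff b s k := by
    rw [racahCoeff, quadPoch, quadPoch]
    ring
  simp only [racahR, zero_add, add_zero, zero_sub, pochR_one_s17, neg_add_eq_sub, term_eq]
  rw [racahSeries]
  field_simp

theorem racahR_three_term {b : ℝ} (s : ℝ) {m : ℕ}
    (hb : ∀ k < m + 2, b ^ 2 ≠ ((k : ℝ) + 1) ^ 2) :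
    ((m : ℝ) + 2) * racahR 0 b 0 0 (m + 2) s =
      (2 * (m : ℝ) + 3) * (2 * s * (s + 1) + ((m : ℝ) + 2) * (m + 1) - b ^ 2 + 1) *
          racahR 0 b 0 0 (m + 1) s -
        ((m : ℝ) + 1) * (b ^ 2 - ((m : ℝ) + 1) ^ 2) ^ 2 * racahR 0 b 0 0 m s := by
  simp only [racahR_eq_mul_racahSeries, pochR_succ]
  push_cast
  linear_combination
    (-(pochR (b + 1) m * pochR (1 - b) m * (((m : ℝ) + 1) ^ 2 - b ^ 2))) *
      racahSeries_three_term s hb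

lemma racahW_eq_one {b s : ℝ} (hb : 0 ≤ b) (hs : -1 < s) (hpole : ∀ k : ℕ, s ≠ b + k) :
    racahW 0 b 0 0 s = 1 := by
  have Gamma_s_ne_zero : Real.Gamma (s + 1) ≠ 0 := (Real.Gamma_pos_of_pos (by linarith)).ne'
  have Gamma_add_ne_zero : Real.Gamma (b + s + 1) ≠ 0 :=
    (Real.Gamma_pos_of_pos (by linarith)).ne'
  have Gamma_sub_ne_zero : Real.Gamma (b - s) ≠ 0 :=
    Real.Gamma_ne_zero fun k hk => hpole k (by linarith)
  simp only [racahW, zero_add, add_zero, sub_zero]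
  field_simp

lemma sqrt_racahD2 {b : ℝ} {n : ℕ} (hn : (n : ℝ) < b) :
    √(racahD2 0 b 0 0 n) =
      Real.Gamma (b + n + 1) / (Real.Gamma (b - n) * √(2 * (n : ℝ) + 1)) := by
  have Gamma_sub_pos : 0 < Real.Gamma (b - n) := Real.Gamma_pos_of_pos (by linarith)
  have Gamma_add_pos : 0 < Real.Gamma (b + n + 1) := by
    have : (0 : ℝ) ≤ n := n.cast_nonneg
    exact Real.Gamma_pos_of_pos (by linarith)
  have d2_eq : racahD2 0 b 0 0 n =
      (Real.Gamma (b + n + 1) / Real.Gamma (b - n)) ^ 2 / (2 * n + 1) := by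
    have Gamma_n_ne_zero : Real.Gamma ((n : ℝ) + 1) ≠ 0 :=
      (Real.Gamma_pos_of_pos (by positivity)).ne'
    simp only [racahD2, zero_add, add_zero, sub_zero]
    field_simp
  rw [d2_eq, Real.sqrt_div (sq_nonneg _), Real.sqrt_sq (by positivity), div_div]

lemma sqrt_racahD2_pos {b : ℝ} {n : ℕ} (hn : (n : ℝ) < b) : 0 < √(racahD2 0 b 0 0 n) := by
  have Gamma_sub_pos : 0 < Real.Gamma (b - n) := Real.Gamma_pos_of_pos (by linarith)
  have Gamma_add_pos : 0 < Real.Gamma (b + n + 1) := by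
    have : (0 : ℝ) ≤ n := n.cast_nonneg
    exact Real.Gamma_pos_of_pos (by linarith)
  rw [sqrt_racahD2 hn]
  exact div_pos Gamma_add_pos (mul_pos Gamma_sub_pos (by positivity))

lemma sqrt_racahD2_succ {b : ℝ} {n : ℕ} (hn : (n : ℝ) + 1 < b) :
    √(racahD2 0 b 0 0 (n + 1)) * √(2 * (n : ℝ) + 3) =
      (b ^ 2 - ((n : ℝ) + 1) ^ 2) * (√(racahD2 0 b 0 0 n) * √(2 * (n : ℝ) + 1)) := by
  have : (0 : ℝ) ≤ n := n.cast_nonneg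
  have Gamma_sub_pos : 0 < Real.Gamma (b - (n + 1)) := Real.Gamma_pos_of_pos (by linarith)
  have Gamma_sub : Real.Gamma (b - n) = (b - (n + 1)) * Real.Gamma (b - (n + 1)) := by
    rw [← Real.Gamma_add_one (by linarith)]
    ring_nf
  have Gamma_add : Real.Gamma (b + (n + 1) + 1) = (b + n + 1) * Real.Gamma (b + n + 1) := by
    rw [← Real.Gamma_add_one (by linarith)]
    ring_nf
  have b_sub_ne_zero : b - (n + 1) ≠ 0 := by linarith
  rw [sqrt_racahD2 (by push_cast; exact hn), sqrt_racahD2 (by linarith)]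
  push_cast
  rw [Gamma_sub, Gamma_add, show 2 * ((n : ℝ) + 1) + 1 = 2 * n + 3 by ring]
  field_simp
  ring

lemma racahHat_eq_div_sqrt_racahD2 {b s : ℝ} {n : ℕ} (hn : (n : ℝ) < b) (hs : -1 < s)
    (hpole : ∀ k : ℕ, s ≠ b + k) :
    racahHat 0 b 0 0 n s = racahR 0 b 0 0 n s * √(2 * s + 1) / √(racahD2 0 b 0 0 n) := by
  have hb : 0 ≤ b := n.cast_nonneg.trans hn.le
  have d2_pos : 0 < racahD2 0 b 0 0 n := Real.sqrt_pos.mp (sqrt_racahD2_pos hn)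
  rw [racahHat, racahW_eq_one hb hs hpole, one_mul, Real.sqrt_div' _ d2_pos.le, mul_div_assoc]

lemma sq_ne_succ_sq_of_lt {b : ℝ} {n : ℕ} (hn : (n : ℝ) < b) (k : ℕ) (hk : k < n) :
    b ^ 2 ≠ ((k : ℝ) + 1) ^ 2 := by
  have : (k : ℝ) + 1 ≤ n := by exact_mod_cast hk
  exact (pow_lt_pow_left₀ (this.trans_lt hn) (by positivity) two_ne_zero).ne'

-- Dividing by the factor `√(2n+1)` of `1 / d_n` leaves rational coefficients.
theorem racahHat_div_sqrt_three_term {b s : ℝ} {m : ℕ} (hm : (m : ℝ) + 2 < b) (hs : -1 < s)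
    (hpole : ∀ k : ℕ, s ≠ b + k) :
    ((m : ℝ) + 2) * (b ^ 2 - ((m : ℝ) + 2) ^ 2) *
        (racahHat 0 b 0 0 (m + 2) s / √(2 * (m : ℝ) + 5)) =
      (2 * (m : ℝ) + 3) * (2 * s * (s + 1) + ((m : ℝ) + 2) * (m + 1) - b ^ 2 + 1) *
          (racahHat 0 b 0 0 (m + 1) s / √(2 * (m : ℝ) + 3)) -
        ((m : ℝ) + 1) * (b ^ 2 - ((m : ℝ) + 1) ^ 2) *
          (racahHat 0 b 0 0 m s / √(2 * (m : ℝ) + 1)) := by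
  have m_two_lt : ((m + 2 : ℕ) : ℝ) < b := by exact_mod_cast hm
  have m_one_lt : ((m + 1 : ℕ) : ℝ) < b := by push_cast; linarith
  have m_lt : (m : ℝ) < b := by linarith
  have b_sq_sub_ne_zero (k : ℕ) (hk : k < m + 2) : b ^ 2 - ((k : ℝ) + 1) ^ 2 ≠ 0 :=
    sub_ne_zero.mpr (sq_ne_succ_sq_of_lt m_two_lt k hk)
  have q₁_ne_zero := b_sq_sub_ne_zero m (by omega)
  have q₂_ne_zero := b_sq_sub_ne_zero (m + 1) (by omega)
  have norm_one := sqrt_racahD2_succ (b := b) (n := m) (by linarith)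
  have norm_two := sqrt_racahD2_succ (b := b) (n := m + 1) (by push_cast; linarith)
  have norm_zero_ne_zero := (sqrt_racahD2_pos m_lt).ne'
  have recurrence := racahR_three_term s (sq_ne_succ_sq_of_lt m_two_lt)
  push_cast at norm_two q₂_ne_zero
  rw [show (m : ℝ) + 1 + 1 = m + 2 by ring] at norm_two q₂_ne_zero
  rw [show 2 * ((m : ℝ) + 1) + 3 = 2 * m + 5 by ring,
    show 2 * ((m : ℝ) + 1) + 1 = 2 * m + 3 by ring, norm_one] at norm_two
  rw [racahHat_eq_div_sqrt_racahD2 m_two_lt hs hpole,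
    racahHat_eq_div_sqrt_racahD2 m_one_lt hs hpole, racahHat_eq_div_sqrt_racahD2 m_lt hs hpole,
    div_div, div_div, div_div, norm_two, norm_one]
  field_simp
  linear_combination √(2 * s + 1) * recurrence

theorem racah_special_case_three_term_recurrence_general
    {b s : ℝ} {n : ℕ} (hn2 : 2 ≤ n) (hn : (n : ℝ) < b) (hs : -1 / 2 ≤ s)
    (hpole : ∀ k : ℕ, s ≠ b + k) :
    racahHat 0 b 0 0 n s =
      ((2 * s * (s + 1) + (n : ℝ) * ((n : ℝ) - 1) - b ^ 2 + 1) *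
            Real.sqrt (4 * (n : ℝ) ^ 2 - 1) /
          ((n : ℝ) * (b - n) * (b + n))) *
          racahHat 0 b 0 0 (n - 1) s +
        (-(((n : ℝ) - 1) * (b - n + 1) * (b + n - 1) /
            ((n : ℝ) * (b - n) * (b + n))) *
          Real.sqrt ((2 * (n : ℝ) + 1) / (2 * (n : ℝ) - 3))) *
          racahHat 0 b 0 0 (n - 2) s := by
  obtain ⟨m, rfl⟩ := Nat.exists_eq_add_of_le' hn2
  have hm : (m : ℝ) + 2 < b := by exact_mod_cast hn
  have recurrence := racahHat_div_sqrt_three_term hm (by linarith) hpole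
  rw [div_eq_mul_inv (racahHat 0 b 0 0 (m + 1) s), ← Real.sqrt_div_self] at recurrence
  have b_sub_ne_zero : b - (m + 2) ≠ 0 := by linarith
  have b_add_ne_zero : b + (m + 2) ≠ 0 := by linarith [m.cast_nonneg (α := ℝ)]
  rw [show m + 2 - 1 = m + 1 by omega, Nat.add_sub_cancel]
  push_cast
  rw [show 4 * ((m : ℝ) + 2) ^ 2 - 1 = (2 * m + 5) * (2 * m + 3) by ring,
    show 2 * ((m : ℝ) + 2) + 1 = 2 * m + 5 by ring,
    show 2 * ((m : ℝ) + 2) - 3 = 2 * m + 1 by ring,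
    Real.sqrt_mul (by positivity), Real.sqrt_div (by positivity)]
  field_simp at recurrence ⊢
  linear_combination recurrence

theorem racah_special_case_three_term_recurrence
    (N : ℕ) (hN : 2 ≤ N) (n : ℕ) (hn2 : 2 ≤ n) (hn : n ≤ N - 1)
    (s : ℕ) (hs : s ≤ N - 1) :
    racahHat 0 (N : ℝ) 0 0 n (s : ℝ) =
      ((2 * (s : ℝ) * ((s : ℝ) + 1) + (n : ℝ) * ((n : ℝ) - 1) - (N : ℝ) ^ 2 + 1) *
            Real.sqrt (4 * (n : ℝ) ^ 2 - 1) /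
          ((n : ℝ) * ((N : ℝ) - n) * ((N : ℝ) + n))) *
          racahHat 0 (N : ℝ) 0 0 (n - 1) (s : ℝ) +
        (-(((n : ℝ) - 1) * ((N : ℝ) - n + 1) * ((N : ℝ) + n - 1) /
            ((n : ℝ) * ((N : ℝ) - n) * ((N : ℝ) + n))) *
          Real.sqrt ((2 * (n : ℝ) + 1) / (2 * (n : ℝ) - 3))) *
          racahHat 0 (N : ℝ) 0 0 (n - 2) (s : ℝ) :=
  racah_special_case_three_term_recurrence_general hn2 (by exact_mod_cast (by omega : n < N))
    (by linarith [s.cast_nonneg (α := ℝ)]) fun k => by exact_mod_cast (by omega : s ≠ N + k)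
end
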